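/- For s > 0, (1/π) ∫_ℝ (1/(s² + x²)) (Γ'/Γ)(1 + ix) dx = (1/s) (Γ'/Γ)(1 + s). -/

import Mathlib

open Real Complex

/-- The digamma function `Γ'/Γ`. -/
noncomputable def digammaC (z : ℂ) : ℂ := deriv Complex.Gamma z / Complex.Gamma z

open MeasureTheory Filter Topology Set

theorem ne_neg_natCast_of_re_pos {z : ℂ} (hz : 0 < z.re) (m : ℕ) : z ≠ -m := fun h => by
  have := congrArg Complex.re h
  simp only [Complex.neg_re, Complex.natCast_re] at this
  have : (0 : ℝ) ≤ m := m.cast_nonneg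
  linarith

theorem hasDerivAt_log_Gamma {x : ℝ} (hx : 0 < x) :
    HasDerivAt (fun y => Real.log (Real.Gamma y)) (digammaC x).re x := by
  have hne : ∀ m : ℕ, (x : ℂ) ≠ -m := ne_neg_natCast_of_re_pos (by simpa using hx)
  have h := (Complex.differentiableAt_Gamma (x : ℂ) hne).hasDerivAt.real_of_complex
  simp only [Complex.Gamma_ofReal, Complex.ofReal_re] at h
  have h2 := h.log (Real.Gamma_pos_of_pos hx).ne'
  convert h2 using 1
  rw [digammaC, Complex.Gamma_ofReal, Complex.div_ofReal_re]

theorem digammaC_ofReal {x : ℝ} (hx : 0 < x) : digammaC x = ((digammaC x).re : ℂ) := by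
  have hne : ∀ m : ℕ, (x : ℂ) ≠ -m := ne_neg_natCast_of_re_pos (by simpa using hx)
  have h := (Complex.differentiableAt_Gamma (x : ℂ) hne).hasDerivAt
  have h1 := h.comp_ofReal
  simp only [Complex.Gamma_ofReal] at h1
  have h2 := (h.real_of_complex).ofReal_comp
  simp only [Complex.Gamma_ofReal, Complex.ofReal_re] at h2
  rw [digammaC, Complex.Gamma_ofReal, Complex.div_ofReal_re, Complex.ofReal_div, h1.unique h2]
  simp

theorem digammaC_add_one {z : ℂ} (hz : 0 < z.re) : digammaC (z + 1) = digammaC z + 1 / z := by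
  have := Complex.digamma_apply_add_one z (ne_neg_natCast_of_re_pos hz)
  simpa [Complex.digamma_def, logDeriv_apply, digammaC] using this

theorem digammaC_add_nat {x : ℝ} (hx : 0 < x) (n : ℕ) :
    (digammaC ((x + n : ℝ) : ℂ)).re = (digammaC x).re + ∑ k ∈ Finset.range n, 1 / (x + k) := by
  induction n with
  | zero => simp
  | succ n ih =>
    have hxn : 0 < x + n := by positivity
    rw [Finset.sum_range_succ, ← add_assoc, ← ih]
    have := digammaC_add_one (z := ((x + n : ℝ) : ℂ)) (by simpa using hxn)
    push_cast at this ⊢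
    rw [← add_assoc, this, Complex.add_re]
    congr 1
    have : (1 / ((x : ℂ) + n)) = ((1 / (x + n) : ℝ) : ℂ) := by push_cast; rfl
    rw [this, Complex.ofReal_re]

theorem log_Gamma_add_one {x : ℝ} (hx : 0 < x) :
    Real.log (Real.Gamma (x + 1)) = Real.log (Real.Gamma x) + Real.log x := by
  rw [Real.Gamma_add_one hx.ne', Real.log_mul hx.ne' (Real.Gamma_pos_of_pos hx).ne', add_comm]

theorem digammaC_re_le_log {x : ℝ} (hx : 0 < x) : (digammaC x).re ≤ Real.log x := by
  refine (Real.convexOn_log_Gamma.le_slope_of_hasDerivAt (mem_Ioi.2 hx)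
    (mem_Ioi.2 (by linarith : 0 < x + 1)) (by linarith) (hasDerivAt_log_Gamma hx)).trans_eq ?_
  simp [slope_def_field, log_Gamma_add_one hx]

theorem log_le_digammaC_re {x : ℝ} (hx : 0 < x) :
    Real.log x ≤ (digammaC ((x + 1 : ℝ) : ℂ)).re := by
  refine (Eq.trans_le ?_ <| Real.convexOn_log_Gamma.slope_le_of_hasDerivAt (mem_Ioi.2 hx)
    (mem_Ioi.2 (by linarith : 0 < x + 1)) (by linarith)
    (hasDerivAt_log_Gamma (by linarith : 0 < x + 1)))
  simp [slope_def_field, log_Gamma_add_one hx]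

theorem tendsto_digammaC_add_nat_sub_log {x : ℝ} (hx : 0 < x) :
    Tendsto (fun n : ℕ => (digammaC ((x + n : ℝ) : ℂ)).re - Real.log n) atTop (𝓝 0) := by
  have key (y : ℝ) : Tendsto (fun n : ℕ => Real.log (n + y) - Real.log n) atTop (𝓝 0) :=
    (Real.tendsto_log_comp_add_sub_log y).comp tendsto_natCast_atTop_atTop
  refine tendsto_of_tendsto_of_tendsto_of_le_of_le' (key (x - 1)) (key x) ?_ ?_
  · filter_upwards [eventually_ge_atTop 1] with n hn
    have h1 : (1 : ℝ) ≤ n := by exact_mod_cast hn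
    have := log_le_digammaC_re (x := n + (x - 1)) (by linarith)
    rw [show (n : ℝ) + (x - 1) + 1 = x + n by ring] at this
    linarith
  · filter_upwards with n
    have := digammaC_re_le_log (x := x + n) (by positivity)
    rw [add_comm (n : ℝ) x]
    linarith

theorem norm_one_div_sub_one_div_le {w : ℂ} (hw : 1 / 2 < w.re) (n : ℕ) :
    ‖1 / ((n : ℂ) + 1) - 1 / (n + w)‖ ≤ 2 * ‖w - 1‖ * (1 / ((n : ℝ) + 1) ^ 2) := by
  have hn : (0 : ℝ) ≤ n := n.cast_nonneg
  have h1 : ((n : ℝ) + 1) / 2 ≤ ‖(n : ℂ) + w‖ := by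
    refine le_trans ?_ (Complex.re_le_norm _)
    simp
    linarith
  have h0 : (n : ℂ) + w ≠ 0 := norm_pos_iff.1 (lt_of_lt_of_le (by positivity) h1)
  have h2 : ‖(n : ℂ) + 1‖ = (n : ℝ) + 1 := by
    have := Complex.norm_of_nonneg (r := n + 1) (by positivity)
    simpa using this
  have h3 : (n : ℂ) + 1 ≠ 0 := Nat.cast_add_one_ne_zero n
  have : 1 / ((n : ℂ) + 1) - 1 / (n + w) = (w - 1) / ((n + 1) * (n + w)) := by
    field_simp; ring
  rw [this, norm_div, norm_mul, h2]
  calc ‖w - 1‖ / ((n + 1) * ‖(n : ℂ) + w‖) ≤ ‖w - 1‖ / ((n + 1) * (((n : ℝ) + 1) / 2)) := by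
        gcongr
    _ = _ := by field_simp

theorem summable_one_div_add_one_sq : Summable fun n : ℕ => 1 / ((n : ℝ) + 1) ^ 2 := by
  have := (summable_nat_add_iff 1).2 (Real.summable_one_div_nat_pow.2 one_lt_two)
  simpa using this

theorem summable_digamma_series {w : ℂ} (hw : 1 / 2 < w.re) :
    Summable fun n : ℕ => 1 / ((n : ℂ) + 1) - 1 / (n + w) :=
  .of_norm_bounded (summable_one_div_add_one_sq.mul_left _) (norm_one_div_sub_one_div_le hw)

theorem digammaC_ofReal_eq_tsum {x : ℝ} (hx : 1 / 2 < x) :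
    digammaC x = -Real.eulerMascheroniConstant +
      ∑' n : ℕ, (1 / ((n : ℂ) + 1) - 1 / (n + x)) := by
  have hx0 : 0 < x := by linarith
  have h1 : Tendsto (fun N : ℕ => (((harmonic N : ℝ) - Real.log N) -
      ((digammaC ((x + N : ℝ) : ℂ)).re - Real.log N) + (digammaC x).re)) atTop
      (𝓝 (Real.eulerMascheroniConstant - 0 + (digammaC x).re)) :=
    (Real.tendsto_harmonic_sub_log.sub (tendsto_digammaC_add_nat_sub_log hx0)).add_const _
  have h2 := (summable_digamma_series (w := x) (by simpa using hx)).hasSum.tendsto_sum_nat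
  have h3 := (Complex.continuous_ofReal.tendsto _).comp h1
  have := tendsto_nhds_unique h2 (h3.congr fun N => ?_)
  · rw [this, digammaC_ofReal hx0]
    simp
  · simp only [Function.comp_apply, digammaC_add_nat hx0, harmonic]
    push_cast
    rw [Finset.sum_sub_distrib]
    simp only [one_div, add_comm (x : ℂ)]
    ring

theorem digammaC_eq_tsum {w : ℂ} (hw : 1 / 2 < w.re) :
    digammaC w = -Real.eulerMascheroniConstant +
      ∑' n : ℕ, (1 / ((n : ℂ) + 1) - 1 / (n + w)) := by
  set U : Set ℂ := {z | 1 / 2 < z.re} ∩ Metric.ball 1 (‖w - 1‖ + 1)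
  have hUo : IsOpen U := (isOpen_lt continuous_const Complex.continuous_re).inter Metric.isOpen_ball
  have hUc : IsPreconnected U :=
    ((convex_halfSpace_re_gt _).inter (convex_ball _ _)).isPreconnected
  have hne : ∀ z ∈ U, ∀ m : ℕ, z ≠ -m := fun z hz =>
    ne_neg_natCast_of_re_pos (one_half_pos.trans hz.1)
  have hG : DifferentiableOn ℂ Complex.Gamma U := fun z hz =>
    (Complex.differentiableAt_Gamma z (hne z hz)).differentiableWithinAt
  have hf : AnalyticOnNhd ℂ digammaC U :=
    ((hG.deriv hUo).div hG fun z hz => Complex.Gamma_ne_zero (hne z hz)).analyticOnNhd hUo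
  have hg : AnalyticOnNhd ℂ (fun z => -(Real.eulerMascheroniConstant : ℂ) +
      ∑' n : ℕ, (1 / ((n : ℂ) + 1) - 1 / (n + z))) U := by
    refine DifferentiableOn.analyticOnNhd (.const_add _ ?_) hUo
    refine Complex.differentiableOn_tsum_of_summable_norm
      (summable_one_div_add_one_sq.mul_left (2 * (‖w - 1‖ + 1))) (fun n z hz => ?_) hUo
      fun n z hz => (norm_one_div_sub_one_div_le hz.1 n).trans ?_
    · have : (n : ℂ) + z ≠ 0 := fun h => hne z hz n (by linear_combination h)
      exact ((differentiableAt_const _).sub ((differentiableAt_const _).div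
        ((differentiableAt_const _).add differentiableAt_id) this)).differentiableWithinAt
    · exact mul_le_mul_of_nonneg_right
        (mul_le_mul_of_nonneg_left (mem_ball_iff_norm.1 hz.2).le zero_le_two) (by positivity)
  have h1 : (1 : ℂ) ∈ U := ⟨by norm_num, Metric.mem_ball_self (by positivity)⟩
  refine hf.eqOn_of_preconnected_of_frequently_eq hg hUc h1 ?_
    (show w ∈ U from ⟨hw, mem_ball_iff_norm.2 (by linarith)⟩)
  have ht : Tendsto (fun x : ℝ => (x : ℂ)) (𝓝[≠] 1) (𝓝[≠] 1) := by
    refine tendsto_nhdsWithin_iff.2 ⟨?_, ?_⟩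
    · exact (Complex.continuous_ofReal.tendsto' _ _ (by simp)).mono_left nhdsWithin_le_nhds
    · filter_upwards [self_mem_nhdsWithin] with x hx
      simpa using hx
  refine ht.frequently (Eventually.frequently ?_)
  filter_upwards [nhdsWithin_le_nhds (lt_mem_nhds (by norm_num : (1 / 2 : ℝ) < 1))] with x hx
  exact digammaC_ofReal_eq_tsum hx

theorem integrable_one_div_sq_add_sq {s : ℝ} (hs : 0 < s) :
    Integrable fun x : ℝ => 1 / (s ^ 2 + x ^ 2) := by
  have h := ((integrable_inv_one_add_sq.comp_div hs.ne').const_mul (s ^ 2)⁻¹)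
  refine h.congr (.of_forall fun x => ?_)
  field_simp

theorem integral_one_div_sq_add_sq {s : ℝ} (hs : 0 < s) :
    ∫ x : ℝ, 1 / (s ^ 2 + x ^ 2) = π / s := by
  have h : ∀ x : ℝ, 1 / (s ^ 2 + x ^ 2) = (s ^ 2)⁻¹ * (1 + (x / s) ^ 2)⁻¹ := fun x => by
    field_simp
  simp_rw [h]
  rw [integral_const_mul, Measure.integral_comp_div (fun x : ℝ => (1 + x ^ 2)⁻¹),
    integral_univ_inv_one_add_sq, abs_of_pos hs, smul_eq_mul]
  field_simp

theorem integrable_sq_div_sq_add_sq_mul {s m : ℝ} (hs : 0 < s) (hm : 0 < m) :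
    Integrable fun x : ℝ => x ^ 2 / ((s ^ 2 + x ^ 2) * (m ^ 2 + x ^ 2)) := by
  refine (integrable_one_div_sq_add_sq hs).mono' ?_ (.of_forall fun x => ?_)
  · refine Continuous.aestronglyMeasurable ?_
    exact (by fun_prop : Continuous fun x : ℝ => x ^ 2).div (by fun_prop) fun x => by positivity
  · rw [Real.norm_of_nonneg (by positivity), div_le_div_iff₀ (by positivity) (by positivity)]
    have : 0 ≤ (s ^ 2 + x ^ 2) * m ^ 2 := by positivity
    nlinarith

theorem integral_sq_div_sq_add_sq_sq {s : ℝ} (hs : 0 < s) :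
    ∫ x : ℝ, x ^ 2 / ((s ^ 2 + x ^ 2) * (s ^ 2 + x ^ 2)) = π / (s + s) := by
  have hd (x : ℝ) : HasDerivAt (fun x : ℝ => x / (s ^ 2 + x ^ 2))
      (1 / (s ^ 2 + x ^ 2) - 2 * (x ^ 2 / ((s ^ 2 + x ^ 2) * (s ^ 2 + x ^ 2)))) x := by
    have h0 : s ^ 2 + x ^ 2 ≠ 0 := by positivity
    refine ((hasDerivAt_id' x).fun_div ((hasDerivAt_pow 2 x).const_add (s ^ 2)) h0).congr_deriv ?_
    push_cast
    field_simp
  have hlim : Tendsto (fun x : ℝ => x / (s ^ 2 + x ^ 2)) (cocompact ℝ) (𝓝 0) := by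
    refine squeeze_zero_norm (a := fun x : ℝ => ‖x‖⁻¹) (fun x => ?_)
      (tendsto_inv_atTop_zero.comp (tendsto_norm_cocompact_atTop (E := ℝ)))
    rcases eq_or_ne x 0 with rfl | hx
    · simp
    · have hx' : 0 < |x| := abs_pos.2 hx
      rw [norm_div, Real.norm_of_nonneg (by positivity : 0 ≤ s ^ 2 + x ^ 2), Real.norm_eq_abs,
        inv_eq_one_div, div_le_div_iff₀ (by positivity) hx']
      nlinarith [abs_mul_abs_self x, sq_nonneg s]
  have hi := (integrable_sq_div_sq_add_sq_mul hs hs).const_mul 2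
  have := integral_of_hasDerivAt_of_tendsto hd ((integrable_one_div_sq_add_sq hs).sub hi)
    (hlim.mono_left atBot_le_cocompact) (hlim.mono_left atTop_le_cocompact)
  rw [integral_sub (integrable_one_div_sq_add_sq hs) hi, integral_const_mul,
    integral_one_div_sq_add_sq hs] at this
  field_simp at this ⊢
  linarith

theorem integral_sq_div_sq_add_sq_mul {s m : ℝ} (hs : 0 < s) (hm : 0 < m) :
    ∫ x : ℝ, x ^ 2 / ((s ^ 2 + x ^ 2) * (m ^ 2 + x ^ 2)) = π / (s + m) := by
  rcases eq_or_ne s m with rfl | hne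
  · exact integral_sq_div_sq_add_sq_sq hs
  have hne' : m ^ 2 - s ^ 2 ≠ 0 := by
    rw [sq_sub_sq]
    exact mul_ne_zero (by positivity) (sub_ne_zero.2 hne.symm)
  have h (x : ℝ) : x ^ 2 / ((s ^ 2 + x ^ 2) * (m ^ 2 + x ^ 2)) =
      m ^ 2 / (m ^ 2 - s ^ 2) * (1 / (m ^ 2 + x ^ 2)) -
        s ^ 2 / (m ^ 2 - s ^ 2) * (1 / (s ^ 2 + x ^ 2)) := by
    have h1 : s ^ 2 + x ^ 2 ≠ 0 := by positivity
    have h2 : m ^ 2 + x ^ 2 ≠ 0 := by positivity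
    field_simp
    ring
  simp_rw [h]
  rw [integral_sub ((integrable_one_div_sq_add_sq hm).const_mul _)
    ((integrable_one_div_sq_add_sq hs).const_mul _), integral_const_mul, integral_const_mul,
    integral_one_div_sq_add_sq hs, integral_one_div_sq_add_sq hm]
  have h3 : s + m ≠ 0 := by positivity
  field_simp
  ring

theorem norm_one_div_sub_one_div_add_I_mul_le {m : ℝ} (hm : 0 < m) (x : ℝ) :
    ‖1 / (m : ℂ) - 1 / (m + Complex.I * x)‖ ≤ (m ^ (3 / 2 : ℝ))⁻¹ * (1 + |x|) ^ (1 / 2 : ℝ) := by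
  have h3 : (m : ℂ) ≠ 0 := by exact_mod_cast hm.ne'
  have h4 : (m : ℂ) + Complex.I * x ≠ 0 := fun h => hm.ne' (by simpa using congrArg Complex.re h)
  have he : 1 / (m : ℂ) - 1 / (m + Complex.I * x) = Complex.I * x / (m * (m + Complex.I * x)) := by
    field_simp
    ring
  have hn : ‖(m : ℂ) + Complex.I * x‖ ^ 2 = m ^ 2 + x ^ 2 := by
    rw [Complex.sq_norm, Complex.normSq_apply]
    simp
    ring
  have hnp : 0 < ‖(m : ℂ) + Complex.I * x‖ := norm_pos_iff.2 h4
  have hm' : m ^ (3 / 2 : ℝ) = m * √m := by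
    rw [show (3 / 2 : ℝ) = 1 + 1 / 2 by norm_num, Real.rpow_add hm, Real.rpow_one,
      Real.sqrt_eq_rpow]
  rw [he, norm_div, norm_mul, norm_mul, Complex.norm_I, one_mul, Complex.norm_real,
    Complex.norm_real, Real.norm_eq_abs, Real.norm_of_nonneg hm.le, hm', ← Real.sqrt_eq_rpow]
  have key : |x| * √m ≤ √(1 + |x|) * ‖(m : ℂ) + Complex.I * x‖ := by
    refine abs_le_of_sq_le_sq' ?_ (by positivity) |>.2
    rw [mul_pow, mul_pow, hn, Real.sq_sqrt hm.le, Real.sq_sqrt (by positivity)]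
    have h1 : |x| * m ≤ m ^ 2 + x ^ 2 := by
      nlinarith [sq_nonneg (|x| - m), sq_abs x]
    nlinarith [abs_nonneg x, sq_nonneg m, sq_nonneg x]
  rw [div_le_iff₀ (by positivity)]
  have hsm : 0 < √m := Real.sqrt_pos.2 hm
  field_simp
  linarith

theorem integrable_poisson_mul_sqrt {s : ℝ} (hs : 0 < s) :
    Integrable fun x : ℝ => 1 / (s ^ 2 + x ^ 2) * (1 + |x|) ^ (1 / 2 : ℝ) := by
  have h := (integrable_one_add_norm (E := ℝ) (μ := volume) (r := 3 / 2)
    (by norm_num)).const_mul (2 * (1 + 1 / s ^ 2))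
  refine h.mono' ?_ (.of_forall fun x => ?_)
  · refine Continuous.aestronglyMeasurable (.mul ?_ ?_)
    · exact continuous_const.div (by fun_prop) fun x => by positivity
    · exact (by fun_prop : Continuous fun x : ℝ => 1 + |x|).rpow_const fun x => .inr (by norm_num)
  · have hp : 0 < 1 + |x| := by positivity
    rw [Real.norm_of_nonneg (by positivity), Real.norm_eq_abs,
      show -(3 / 2 : ℝ) = 1 / 2 - (2 : ℕ) by norm_num, Real.rpow_sub hp, Real.rpow_natCast,
      ← mul_div_assoc, mul_comm, mul_one_div, div_le_div_iff₀ (by positivity) (by positivity)]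
    have h1 : (1 + |x|) ^ 2 ≤ 2 * (1 + 1 / s ^ 2) * (s ^ 2 + x ^ 2) := by
      have : 2 * (1 + 1 / s ^ 2) * (s ^ 2 + x ^ 2) =
        2 * s ^ 2 + 2 * x ^ 2 + 2 + 2 * (x ^ 2 / s ^ 2) := by field_simp; ring
      rw [this]
      have : 0 ≤ x ^ 2 / s ^ 2 := by positivity
      nlinarith [sq_nonneg (1 - |x|), sq_abs x, sq_nonneg s]
    calc (1 + |x|) ^ (1 / 2 : ℝ) * (1 + |x|) ^ 2
        ≤ (1 + |x|) ^ (1 / 2 : ℝ) * (2 * (1 + 1 / s ^ 2) * (s ^ 2 + x ^ 2)) := by gcongr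
      _ = _ := by ring

theorem norm_poisson_mul_term_le {s m : ℝ} (hm : 0 < m) (x : ℝ) :
    ‖1 / ((s : ℂ) ^ 2 + (x : ℂ) ^ 2) * (1 / (m : ℂ) - 1 / (m + Complex.I * x))‖ ≤
      (m ^ (3 / 2 : ℝ))⁻¹ * (1 / (s ^ 2 + x ^ 2) * (1 + |x|) ^ (1 / 2 : ℝ)) := by
  have : 1 / ((s : ℂ) ^ 2 + (x : ℂ) ^ 2) = ((1 / (s ^ 2 + x ^ 2) : ℝ) : ℂ) := by push_cast; rfl
  rw [norm_mul, this, Complex.norm_real, Real.norm_of_nonneg (by positivity), mul_left_comm]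
  exact mul_le_mul_of_nonneg_left (norm_one_div_sub_one_div_add_I_mul_le hm x) (by positivity)

theorem integrable_poisson_mul_term {s m : ℝ} (hs : 0 < s) (hm : 0 < m) :
    Integrable fun x : ℝ => 1 / ((s : ℂ) ^ 2 + (x : ℂ) ^ 2) *
      (1 / (m : ℂ) - 1 / (m + Complex.I * x)) := by
  refine ((integrable_poisson_mul_sqrt hs).const_mul (m ^ (3 / 2 : ℝ))⁻¹).mono'
    (by fun_prop) (.of_forall (norm_poisson_mul_term_le hm))

theorem integral_poisson_mul_term {s m : ℝ} (hs : 0 < s) (hm : 0 < m) :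
    ∫ x : ℝ, 1 / ((s : ℂ) ^ 2 + (x : ℂ) ^ 2) * (1 / (m : ℂ) - 1 / (m + Complex.I * x)) =
      (π : ℂ) / s * (1 / m - 1 / (m + s)) := by
  set f : ℝ → ℂ := fun x =>
    1 / ((s : ℂ) ^ 2 + (x : ℂ) ^ 2) * (1 / (m : ℂ) - 1 / (m + Complex.I * x)) with hf
  have hfint : Integrable f := integrable_poisson_mul_term hs hm
  have hsum (x : ℝ) : f x + f (-x) =
      ((2 / m * (x ^ 2 / ((s ^ 2 + x ^ 2) * (m ^ 2 + x ^ 2))) : ℝ) : ℂ) := by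
    have h1 : ((s : ℂ) ^ 2 + (x : ℂ) ^ 2) ≠ 0 := by
      exact_mod_cast (by positivity : s ^ 2 + x ^ 2 ≠ 0)
    have h2 : ((m : ℂ) ^ 2 + (x : ℂ) ^ 2) ≠ 0 := by
      exact_mod_cast (by positivity : m ^ 2 + x ^ 2 ≠ 0)
    have h3 : (m : ℂ) ≠ 0 := by exact_mod_cast hm.ne'
    have h4 : (m : ℂ) + Complex.I * x ≠ 0 := fun h => hm.ne' (by simpa using congrArg Complex.re h)
    have h5 : (m : ℂ) - Complex.I * x ≠ 0 := fun h => hm.ne' (by simpa using congrArg Complex.re h)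
    have h6 : (m : ℂ) ^ 2 + (x : ℂ) ^ 2 = (m + Complex.I * x) * (m - Complex.I * x) := by
      linear_combination (x : ℂ) ^ 2 * Complex.I_sq
    simp only [hf]
    push_cast
    rw [h6, neg_sq, mul_neg, ← sub_eq_add_neg]
    have h7 : (Complex.I * x) ^ 2 = -(x : ℂ) ^ 2 := by rw [mul_pow, Complex.I_sq, neg_one_mul]
    generalize Complex.I * (x : ℂ) = y at h4 h5 h7 ⊢
    field_simp
    linear_combination (-2 : ℂ) * h7
  have h2 : (∫ x, f x) + ∫ x, f x = ((2 / m * (π / (s + m)) : ℝ) : ℂ) := by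
    nth_rewrite 2 [← integral_neg_eq_self f volume]
    rw [← integral_add hfint hfint.comp_neg]
    simp_rw [hsum]
    rw [integral_complex_ofReal, integral_const_mul, integral_sq_div_sq_add_sq_mul hs hm]
  have h3 : (m : ℂ) ≠ 0 := by exact_mod_cast hm.ne'
  have h4 : (s : ℂ) ≠ 0 := by exact_mod_cast hs.ne'
  have h5 : (m + s : ℂ) ≠ 0 := by exact_mod_cast (by positivity : m + s ≠ 0)
  have h6 : (s + m : ℂ) ≠ 0 := by rwa [add_comm]
  have : (∫ x, f x) = (1 / m * (π / (s + m)) : ℂ) := by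
    push_cast at h2
    linear_combination h2 / 2
  refine this.trans ?_
  field_simp
  ring

theorem poisson_kernel_digamma (s : ℝ) (hs : 0 < s) :
    (1 / (π : ℂ)) *
        ∫ x : ℝ, (1 / ((s : ℂ) ^ 2 + (x : ℂ) ^ 2)) * digammaC (1 + Complex.I * x) =
      (1 / (s : ℂ)) * digammaC (1 + s) := by
  set P : ℝ → ℂ := fun x => 1 / ((s : ℂ) ^ 2 + (x : ℂ) ^ 2) with hP
  set F : ℕ → ℝ → ℂ := fun n x =>
    P x * (1 / ((n + 1 : ℝ) : ℂ) - 1 / (((n + 1 : ℝ) : ℂ) + Complex.I * x)) with hF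
  have hn (n : ℕ) : (0 : ℝ) < n + 1 := by positivity
  have hPr : P = fun x : ℝ => ((1 / (s ^ 2 + x ^ 2) : ℝ) : ℂ) := by
    funext x
    simp [hP]
  have hPi : Integrable P := hPr ▸ (integrable_one_div_sq_add_sq hs).ofReal
  have hPint : ∫ x, P x = π / s := by
    rw [hPr, integral_complex_ofReal, integral_one_div_sq_add_sq hs, Complex.ofReal_div]
  have hFi (n : ℕ) : Integrable (F n) := integrable_poisson_mul_term hs (hn n)
  have hbound (n : ℕ) (x : ℝ) : ‖F n x‖ ≤ (((n : ℝ) + 1) ^ (3 / 2 : ℝ))⁻¹ *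
      (1 / (s ^ 2 + x ^ 2) * (1 + |x|) ^ (1 / 2 : ℝ)) := norm_poisson_mul_term_le (hn n) x
  have hsm : Summable fun n : ℕ => (((n : ℝ) + 1) ^ (3 / 2 : ℝ))⁻¹ := by
    have := (summable_nat_add_iff 1).2
      (Real.summable_nat_rpow_inv.2 (by norm_num : (1 : ℝ) < 3 / 2))
    simpa using this
  have hgi := integrable_poisson_mul_sqrt hs
  have hsum : HasSum (fun n => ∫ x, F n x) (∫ x, ∑' n, F n x) := by
    refine hasSum_integral_of_summable_integral_norm hFi ?_
    refine .of_nonneg_of_le (fun n => integral_nonneg fun x => norm_nonneg _) (fun n => ?_)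
      (hsm.mul_right (∫ x : ℝ, 1 / (s ^ 2 + x ^ 2) * (1 + |x|) ^ (1 / 2 : ℝ)))
    rw [← integral_const_mul]
    exact integral_mono (hFi n).norm (hgi.const_mul _) (hbound n)
  have htsum : Integrable fun x => ∑' n, F n x := by
    refine (hgi.const_mul (∑' n : ℕ, (((n : ℝ) + 1) ^ (3 / 2 : ℝ))⁻¹)).mono' ?_
      (.of_forall fun x => tsum_of_norm_bounded (hsm.hasSum.mul_right _) fun n => hbound n x)
    exact (Measurable.tsum fun n => by simp only [hF, hP]; fun_prop).aestronglyMeasurable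
  have hfint : ∫ x, P x * digammaC (1 + Complex.I * x) =
      ∫ x, (P x * -Real.eulerMascheroniConstant + ∑' n, F n x) := by
    congr 1 with x
    rw [digammaC_eq_tsum (by simp; norm_num), mul_add, ← tsum_mul_left]
    simp only [hF]
    push_cast
    simp only [add_assoc]
  have hterm (n : ℕ) : ∫ x, F n x = (π : ℂ) / s * (1 / ((n : ℂ) + 1) - 1 / (n + (1 + s))) := by
    refine (integral_poisson_mul_term hs (hn n)).trans ?_
    push_cast
    rw [add_assoc]
  have hπ : (π : ℂ) ≠ 0 := by exact_mod_cast Real.pi_ne_zero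
  rw [hfint, integral_add (hPi.mul_const _) htsum, integral_mul_const, hPint, ← hsum.tsum_eq,
    tsum_congr hterm, tsum_mul_left, digammaC_eq_tsum (by simp; linarith)]
  field_simp
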